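/- arXiv:1710.04293 — 4 statements merged into one kernel-verified Lean document; each statement's English description precedes it below -/
import Mathlib

section
/- Let t ≥ 1 and let a = (a_1, …, a_{t+2}) and b = (b_2, …, b_t) be sequences of variables from {x_1, …, x_n} (repetitions allowed). For 1 ≤ j ≤ t+2 set a^{(j)} := (a_1, …, a_{j-1}, a_{j+1}, …, a_{t+2}) (a_j omitted) and b^{(j)} := (a_j, b_2, …, b_t). Then Σ_{j=1}^{t+2} (-1)^j · z_{a^{(j)}, b^{(j)}} = 0 in S_1 ⊗_k ⋀^t S_2. -/
set_option maxHeartbeats 1000000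
set_option synthInstance.maxHeartbeats 400000

open scoped TensorProduct
open MvPolynomial

noncomputable section

variable (k : Type) [Field k] (n : ℕ)

/-- The polynomial ring `S = k[x_1,…,x_n]`. -/
abbrev S := MvPolynomial (Fin n) k

/-- The space `S_1` of linear forms. -/
abbrev S1 := homogeneousSubmodule (Fin n) k 1

/-- The space `S_2` of quadratic forms. -/
abbrev S2 := homogeneousSubmodule (Fin n) k 2

/-- The ambient algebra `S ⊗ Λ(S_2)` containing all terms `K_t = S ⊗ ⋀^t S_2`
of the Koszul complex `K(𝔪², S)`; the product is `(f ⊗ ω)(g ⊗ η) = fg ⊗ ω∧η`. -/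
abbrev KK := (MvPolynomial (Fin n) k) ⊗[k] ExteriorAlgebra k (S2 k n)

variable {k n}

/-- The product of two linear forms, as an element of `S_2`. -/
def mulW (a b : S1 k n) : S2 k n :=
  ⟨(a : S k n) * (b : S k n), by
    rw [mem_homogeneousSubmodule]
    have ha := (mem_homogeneousSubmodule 1 (a : S k n)).1 a.2
    have hb := (mem_homogeneousSubmodule 1 (b : S k n)).1 b.2
    simpa using ha.mul hb⟩

/-- The variable `x_i`, as an element of `S_1`. -/
def xv (i : Fin n) : S1 k n :=
  ⟨X i, by rw [mem_homogeneousSubmodule]; exact isHomogeneous_X _ _⟩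

/-- The quadratic monomial `x_i x_j`, as an element of `S_2`. -/
def q (i j : Fin n) : S2 k n := mulW (xv i) (xv j)

variable (k n)

/-- `K_t = S ⊗ ⋀^t S_2`, as a subspace of the ambient algebra `KK`. -/
def Kt (t : ℕ) : Submodule k (KK k n) :=
  LinearMap.range (TensorProduct.map (LinearMap.id : S k n →ₗ[k] S k n)
    (Submodule.subtype (⋀[k]^t (S2 k n))))

variable {k n}

/-- The family of Koszul differentials, encoded as linear endomorphisms of the
ambient space `KK`: `D t` restricted to `K_t` is the `t`-th Koszul differential
`d_t : K_t → K_{t-1}`, i.e. `d_0 = 0` and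
`d_t(f ⊗ m_1 ∧ ⋯ ∧ m_t) = Σ_j (-1)^{j-1} (f·m_j) ⊗ m_1 ∧ ⋯ ∧ m̂_j ∧ ⋯ ∧ m_t`. -/
def IsKoszulDiff (D : ℕ → KK k n →ₗ[k] KK k n) : Prop :=
  D 0 = 0 ∧
  ∀ (t : ℕ) (f : S k n) (m : Fin (t+1) → S2 k n),
    D (t+1) (f ⊗ₜ[k] (ExteriorAlgebra.ιMulti k (t+1) m : ExteriorAlgebra k (S2 k n)))
      = ∑ j : Fin (t+1), ((-1:ℤ)^(j:ℕ)) •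
          ((f * ((m j : S k n))) ⊗ₜ[k]
            (ExteriorAlgebra.ιMulti k t (fun l => m (j.succAbove l)) : ExteriorAlgebra k (S2 k n)))

/-- The cycle `z_{a,b} = Σ_{σ ∈ 𝔖_{t+1}} sgn(σ) a_{σ(t+1)} ⊗ (b_1 a_{σ(1)} ∧ ⋯ ∧ b_t a_{σ(t)})`. -/
def zel (t : ℕ) (a : Fin (t+1) → S1 k n) (b : Fin t → S1 k n) : KK k n :=
  ∑ σ : Equiv.Perm (Fin (t+1)),
    ((Equiv.Perm.sign σ : ℤ)) •
      (((a (σ (Fin.last t)) : S k n)) ⊗ₜ[k]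
        (ExteriorAlgebra.ιMulti k t (fun j => mulW (b j) (a (σ j.castSucc))) :
          ExteriorAlgebra k (S2 k n)))

/-- The cycle `Z_i` (0-indexed: `Zel i` is the paper's `Z_i` for `0 ≤ i ≤ n-1`), namely
`Z_i = Σ_{j=0}^{i} (-1)^{j} x_j ⊗ (x_0 x_i ∧ ⋯ ∧ x̂_j x_i ∧ ⋯ ∧ x_{i-1} x_i ∧ x_i²)`. -/
def Zel (i : Fin n) : KK k n :=
  ∑ j : Fin ((i:ℕ)+1),
    ((-1:ℤ)^(j:ℕ)) •
      ((X (Fin.castLE i.isLt j) : S k n) ⊗ₜ[k]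
        (ExteriorAlgebra.ιMulti k (i:ℕ)
          (fun l : Fin (i:ℕ) => q (Fin.castLE i.isLt (j.succAbove l)) i) :
            ExteriorAlgebra k (S2 k n)))

/-!
Let `f(v) = v_{t+2} ⊗ (v_0 v_1 ∧ b_2 v_2 ∧ ⋯ ∧ b_{t+1} v_{t+1})`. Sorting the permutations `τ`
in the signed sum `∑_τ sgn(τ) f(a ∘ τ)` by the value `j = τ(0)` gives `∑_j (-1)^j z_{a⁽ʲ⁾, b⁽ʲ⁾}`.
On the other hand `f` is unchanged when `v_0` and `v_1` are exchanged, because they enter only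
through their product, so the terms of `τ` and `τ ∘ (0 1)` cancel.
-/

open Equiv (Perm swap)

section ConsPerm

variable {m : ℕ}

/-- The permutation of `Fin (m + 1)` whose one-line notation is `j` followed by that of `σ`, where
`σ` is read as permuting the complement of `j`. It describes the permutations with `0 ↦ j`. -/
def consPerm (j : Fin (m + 1)) (σ : Perm (Fin m)) : Perm (Fin (m + 1)) :=
  j.cycleRange.symm * Perm.decomposeFin.symm (0, σ)

@[simp]
theorem consPerm_zero (j : Fin (m + 1)) (σ : Perm (Fin m)) : consPerm j σ 0 = j := by
  simp [consPerm]

@[simp]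
theorem consPerm_succ (j : Fin (m + 1)) (σ : Perm (Fin m)) (i : Fin m) :
    consPerm j σ i.succ = j.succAbove (σ i) := by
  simp [consPerm]

theorem sign_consPerm (j : Fin (m + 1)) (σ : Perm (Fin m)) :
    Perm.sign (consPerm j σ) = (-1) ^ (j : ℕ) * Perm.sign σ := by
  simp [consPerm]

theorem comp_consPerm {α : Type*} (a : Fin (m + 1) → α) (j : Fin (m + 1)) (σ : Perm (Fin m)) :
    a ∘ consPerm j σ = Fin.cons (a j) ((a ∘ j.succAbove) ∘ σ) := by
  funext i
  cases i using Fin.cases <;> simp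

theorem consPerm_injective :
    Function.Injective fun p : Fin (m + 1) × Perm (Fin m) ↦ consPerm p.1 p.2 := by
  rintro ⟨j, σ⟩ ⟨j', σ'⟩ h
  obtain rfl : j = j' := by simpa using Equiv.congr_fun h 0
  have hσ : σ = σ' := Equiv.ext fun i ↦ by simpa using Equiv.congr_fun h i.succ
  rw [hσ]

theorem consPerm_bijective :
    Function.Bijective fun p : Fin (m + 1) × Perm (Fin m) ↦ consPerm p.1 p.2 :=
  (Fintype.bijective_iff_injective_and_card _).2
    ⟨consPerm_injective, by simp [Fintype.card_perm, Nat.factorial_succ]⟩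

end ConsPerm

section Antisymmetrization

variable {ι α M : Type*} [Fintype ι] [DecidableEq ι] [AddCommGroup M]

/-- The signed sum of `f` over all rearrangements of the family `a`. For multilinear `f` this is
`MultilinearMap.alternatization`; here `f` is an arbitrary function. -/
def antisymmetrization (f : (ι → α) → M) (a : ι → α) : M :=
  ∑ σ : Perm ι, (Perm.sign σ : ℤ) • f (a ∘ σ)

theorem antisymmetrization_eq_zero_of_comp_swap {f : (ι → α) → M} {i j : ι} (hij : i ≠ j)
    (hf : ∀ v, f (v ∘ swap i j) = f v) (a : ι → α) : antisymmetrization f a = 0 := by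
  refine Finset.sum_involution (fun τ _ ↦ τ * swap i j) (fun τ _ ↦ ?_)
    (fun _ _ _ ↦ mt Equiv.mul_swap_eq_iff.1 hij) (fun _ _ ↦ Finset.mem_univ _)
    (fun τ _ ↦ Equiv.mul_swap_mul_self i j τ)
  simp [Perm.sign_swap hij, ← Function.comp_assoc, hf]

theorem antisymmetrization_eq_sum_succAbove {m : ℕ} (f : (Fin (m + 1) → α) → M)
    (a : Fin (m + 1) → α) :
    antisymmetrization f a =
      ∑ j : Fin (m + 1), (-1 : ℤ) ^ (j : ℕ) •
        antisymmetrization (fun v : Fin m → α ↦ f (Fin.cons (a j) v)) (a ∘ j.succAbove) := by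
  simp only [antisymmetrization, Finset.smul_sum, smul_smul]
  rw [← consPerm_bijective.sum_comp, Fintype.sum_prod_type]
  simp [sign_consPerm, comp_consPerm]

end Antisymmetrization

theorem mulW_comm (x y : S1 k n) : mulW x y = mulW y x :=
  Subtype.ext (mul_comm _ _)

/-- The term `v_t ⊗ (b_0 v_0 ∧ ⋯ ∧ b_{t-1} v_{t-1})`, whose antisymmetrization in `v` is
`zel t v b`. -/
def zelTerm (t : ℕ) (b : Fin t → S1 k n) (v : Fin (t + 1) → S1 k n) : KK k n :=
  (v (Fin.last t) : S k n) ⊗ₜ[k]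
    ExteriorAlgebra.ιMulti k t fun j ↦ mulW (b j) (v j.castSucc)

theorem zel_eq_antisymmetrization (t : ℕ) (a : Fin (t + 1) → S1 k n) (b : Fin t → S1 k n) :
    zel t a b = antisymmetrization (zelTerm t b) a :=
  rfl

/-- The term `v_{t+2} ⊗ (v_0 v_1 ∧ b_2 v_2 ∧ ⋯ ∧ b_{t+1} v_{t+1})` of the Garnir relation, with
`b_2, …, b_{t+1}` indexed by `Fin t`. -/
def garnirTerm (t : ℕ) (b : Fin t → S1 k n) (v : Fin (t + 3) → S1 k n) : KK k n :=
  zelTerm (t + 1) (Fin.cons (v 0) b) (Fin.tail v)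

theorem garnirTerm_comp_swap (t : ℕ) (b : Fin t → S1 k n) (v : Fin (t + 3) → S1 k n) :
    garnirTerm t b (v ∘ swap 0 1) = garnirTerm t b v := by
  have tail_succ (i : Fin (t + 1)) : Fin.tail (v ∘ swap 0 1) i.succ = Fin.tail v i.succ :=
    congrArg v (Equiv.swap_apply_of_ne_of_ne (Fin.succ_ne_zero _) (Fin.succ_succ_ne_one i))
  have factors_eq (i : Fin (t + 1)) :
      mulW (Fin.cons (α := fun _ ↦ S1 k n) ((v ∘ swap 0 1) 0) b i)
          (Fin.tail (v ∘ swap 0 1) i.castSucc) =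
        mulW (Fin.cons (α := fun _ ↦ S1 k n) (v 0) b i) (Fin.tail v i.castSucc) := by
    cases i using Fin.cases with
    | zero => simpa [Fin.tail] using mulW_comm (v 1) (v 0)
    | succ i => simp only [Fin.cons_succ, ← Fin.succ_castSucc, tail_succ]
  simp only [garnirTerm, zelTerm, factors_eq, ← Fin.succ_last, tail_succ]

theorem antisymmetrization_garnirTerm_eq_sum_zel (t : ℕ) (a : Fin (t + 3) → S1 k n)
    (b : Fin t → S1 k n) :
    antisymmetrization (garnirTerm t b) a =
      ∑ j : Fin (t + 3), (-1 : ℤ) ^ (j : ℕ) • zel (t + 1) (a ∘ j.succAbove) (Fin.cons (a j) b) := by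
  simp only [antisymmetrization_eq_sum_succAbove, zel_eq_antisymmetrization, garnirTerm,
    Fin.cons_zero, Fin.tail_cons]

theorem garnir_relation_general (t : ℕ) (a : Fin (t + 3) → S1 k n) (b : Fin t → S1 k n) :
    ∑ j : Fin (t + 3), (-1 : ℤ) ^ ((j : ℕ) + 1) •
      zel (t + 1) (a ∘ j.succAbove) (Fin.cons (a j) b) = 0 := by
  have alternating_sum_eq_zero := antisymmetrization_eq_zero_of_comp_swap
    Fin.zero_ne_one (garnirTerm_comp_swap t b) a
  rw [antisymmetrization_garnirTerm_eq_sum_zel] at alternating_sum_eq_zero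
  simp only [pow_succ, mul_neg_one, neg_smul, Finset.sum_neg_distrib, alternating_sum_eq_zero,
    neg_zero]

/-- **Garnir-type relations.** Let `t ≥ 1` (encoded as `t+1` for `t : ℕ`),
let `a = (a_1,…,a_{t+3})` and `b = (b_2,…,b_{t+1})` be sequences of variables (repetitions
allowed).  For each `j` let `a⁽ʲ⁾` be `a` with its `j`-th entry omitted and
`b⁽ʲ⁾ = (a_j, b_2, …, b_{t+1})`.  Then `Σ_j (-1)^j z_{a⁽ʲ⁾, b⁽ʲ⁾} = 0`. -/
theorem garnir_relation (k : Type) [Field k] [CharZero k] (n : ℕ)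
    (t : ℕ) (a : Fin (t+3) → Fin n) (b : Fin t → Fin n) :
    ∑ j : Fin (t+3), ((-1:ℤ)^((j:ℕ)+1)) •
      (zel (t+1) (fun l => (xv (a (j.succAbove l)) : S1 k n))
        (Fin.cons (α := fun _ => S1 k n) (xv (a j)) (fun l => xv (b l))) : KK k n)
      = (0 : KK k n) := by
  exact garnir_relation_general t (fun i => xv (a i)) (fun l => xv (b l))

end
end

section
/- For every t ≥ 0 and all sequences a = (a_1, …, a_{t+1}) and b = (b_1, …, b_t) of elements of S_1, the element z_{a,b} is a Koszul cycle: d_t(z_{a,b}) = 0 in K_{t-1}. -/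
set_option maxHeartbeats 1000000
set_option synthInstance.maxHeartbeats 400000

open scoped TensorProduct
open MvPolynomial

noncomputable section

variable (k : Type) [Field k] (n : ℕ)

variable {k n}

variable (k n)

variable {k n}

/-! For a fixed position `j` of the contracted factor, the summand of `d (z_{a,b})` indexed by `σ`
has coefficient `a_{σ(t+1)} a_{σ(j)} b_j`, and the remaining wedge factors involve neither `σ(j)`
nor `σ(t+1)`. Up to the sign of `σ` it is therefore unchanged when `σ` is multiplied on the right
by the transposition `(j t+1)`, so the summands cancel in pairs. All that matters about the entries
is the vanishing of the `2 × 2` minors `a_p (b_j a_r) - a_r (b_j a_p)`. -/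

theorem sum_sign_smul_eq_zero_of_mul_swap_eq {α G : Type*} [Fintype α] [DecidableEq α]
    [AddCommGroup G] {i j : α} (hij : i ≠ j) (g : Equiv.Perm α → G)
    (hg : ∀ σ, g (σ * Equiv.swap i j) = g σ) :
    ∑ σ, (Equiv.Perm.sign σ : ℤ) • g σ = 0 := by
  refine Finset.sum_involution (fun σ _ => σ * Equiv.swap i j) ?_ ?_ (by simp) (by simp)
  · intro σ _
    simp [hg, Equiv.Perm.sign_swap hij]
  · intro σ _ _
    simpa using hij

theorem swap_castSucc_last_apply_castSucc_succAbove {t : ℕ} (j : Fin (t + 1)) (l : Fin t) :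
    Equiv.swap j.castSucc (Fin.last (t + 1)) (j.succAbove l).castSucc =
      (j.succAbove l).castSucc :=
  Equiv.swap_apply_of_ne_of_ne
    ((Fin.castSucc_injective _).ne (Fin.succAbove_ne j l)) (Fin.castSucc_ne_last _)

section KoszulComplex

variable {R A M : Type*} [CommRing R] [CommRing A] [Algebra R A] [AddCommGroup M] [Module R M]

/-- The family `D` consists of the differentials of the Koszul complex `A ⊗ ⋀ M` of a linear map
`φ : M → A`. As in `IsKoszulDiff`, each `D t` is an endomorphism of the whole space
`A ⊗ ⋀ M`, but is only prescribed on `A ⊗ ⋀^t M`. -/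
def IsKoszulDifferential (φ : M →ₗ[R] A)
    (D : ℕ → A ⊗[R] ExteriorAlgebra R M →ₗ[R] A ⊗[R] ExteriorAlgebra R M) : Prop :=
  D 0 = 0 ∧
  ∀ (t : ℕ) (f : A) (m : Fin (t + 1) → M),
    D (t + 1) (f ⊗ₜ[R] ExteriorAlgebra.ιMulti R (t + 1) m) =
      ∑ j : Fin (t + 1), ((-1 : ℤ) ^ (j : ℕ)) •
        ((f * φ (m j)) ⊗ₜ[R] ExteriorAlgebra.ιMulti R t (fun l => m (j.succAbove l)))

variable (R) in
/-- The skew-symmetrization `Σ_σ sgn(σ) f_{σ(t+1)} ⊗ (m_{1,σ(1)} ∧ ⋯ ∧ m_{t,σ(t)})`, of which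
`z_{a,b}` is the case `f_p = a_p`, `m_{j,p} = b_j a_p`. -/
def skewTensor {t : ℕ} (f : Fin (t + 1) → A) (m : Fin t → Fin (t + 1) → M) :
    A ⊗[R] ExteriorAlgebra R M :=
  ∑ σ : Equiv.Perm (Fin (t + 1)), (Equiv.Perm.sign σ : ℤ) •
    (f (σ (Fin.last t)) ⊗ₜ[R] ExteriorAlgebra.ιMulti R t (fun j => m j (σ j.castSucc)))

/-- The summand of the differential of `skewTensor R f m` indexed by the permutation `σ` and the
contracted wedge factor `j`, without its two signs. -/
def contractedTerm {t : ℕ} (φ : M →ₗ[R] A) (f : Fin (t + 2) → A)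
    (m : Fin (t + 1) → Fin (t + 2) → M) (j : Fin (t + 1)) (σ : Equiv.Perm (Fin (t + 2))) :
    A ⊗[R] ExteriorAlgebra R M :=
  (f (σ (Fin.last (t + 1))) * φ (m j (σ j.castSucc))) ⊗ₜ[R]
    ExteriorAlgebra.ιMulti R t (fun l => m (j.succAbove l) (σ (j.succAbove l).castSucc))

variable {φ : M →ₗ[R] A}

theorem IsKoszulDifferential.apply_skewTensor
    {D : ℕ → A ⊗[R] ExteriorAlgebra R M →ₗ[R] A ⊗[R] ExteriorAlgebra R M}
    (hD : IsKoszulDifferential φ D) {t : ℕ} (f : Fin (t + 2) → A)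
    (m : Fin (t + 1) → Fin (t + 2) → M) :
    D (t + 1) (skewTensor R f m) =
      ∑ j : Fin (t + 1), ((-1 : ℤ) ^ (j : ℕ)) •
        ∑ σ, (Equiv.Perm.sign σ : ℤ) • contractedTerm φ f m j σ := by
  simp only [skewTensor, contractedTerm, map_sum, map_zsmul, hD.2, Finset.smul_sum]
  rw [Finset.sum_comm]
  exact Finset.sum_congr rfl fun j _ => Finset.sum_congr rfl fun σ _ => smul_comm _ _ _

theorem contractedTerm_mul_swap {t : ℕ} {f : Fin (t + 2) → A} {m : Fin (t + 1) → Fin (t + 2) → M}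
    {j : Fin (t + 1)} (hfm : ∀ p r, f p * φ (m j r) = f r * φ (m j p))
    (σ : Equiv.Perm (Fin (t + 2))) :
    contractedTerm φ f m j (σ * Equiv.swap j.castSucc (Fin.last (t + 1))) =
      contractedTerm φ f m j σ := by
  simp only [contractedTerm, Equiv.Perm.mul_apply, Equiv.swap_apply_left, Equiv.swap_apply_right,
    swap_castSucc_last_apply_castSucc_succAbove, hfm (σ j.castSucc)]

theorem koszul_cycle_zel_general
    {D : ℕ → A ⊗[R] ExteriorAlgebra R M →ₗ[R] A ⊗[R] ExteriorAlgebra R M}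
    (hD : IsKoszulDifferential φ D) {t : ℕ} (f : Fin (t + 1) → A) (m : Fin t → Fin (t + 1) → M)
    (hfm : ∀ j p r, f p * φ (m j r) = f r * φ (m j p)) :
    D t (skewTensor R f m) = 0 := by
  cases t with
  | zero => rw [hD.1, LinearMap.zero_apply]
  | succ t =>
    rw [hD.apply_skewTensor]
    refine Finset.sum_eq_zero fun j _ => ?_
    rw [sum_sign_smul_eq_zero_of_mul_swap_eq (Fin.castSucc_ne_last j) _
      (contractedTerm_mul_swap (hfm j)), smul_zero]

end KoszulComplex

theorem coe_mul_coe_mulW_comm (a b c : S1 k n) :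
    (a : S k n) * (mulW b c : S k n) = c * (mulW b a : S k n) := by
  simp only [mulW]
  ring

/-- For every `t ≥ 0` and all sequences `a = (a_1,…,a_{t+1})`,
`b = (b_1,…,b_t)` of elements of `S_1`, the element `z_{a,b}` is a Koszul cycle:
`d_t(z_{a,b}) = 0`. -/
theorem koszul_cycle_zel (k : Type) [Field k] [CharZero k] (n : ℕ)
    (t : ℕ) (a : Fin (t+1) → S1 k n) (b : Fin t → S1 k n)
    (D : ℕ → KK k n →ₗ[k] KK k n) (hD : IsKoszulDiff D) :
    D t (zel t a b) = 0 :=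
  koszul_cycle_zel_general (φ := (S2 k n).subtype) hD (fun p => (a p : S k n))
    (fun j p => mulW (b j) (a p)) fun j p r => coe_mul_coe_mulW_comm (a p) (b j) (a r)

end
end

section
/- The product Z_0 · Z_1 · ⋯ · Z_{n-1} is a nonzero element of K_N, where N = n(n-1)/2. -/
set_option maxHeartbeats 1000000
set_option synthInstance.maxHeartbeats 400000

open scoped TensorProduct
open MvPolynomial

noncomputable section

variable (k : Type) [Field k] (n : ℕ)

variable {k n}

variable (k n)

variable {k n}

/-!
Evaluating `x_j` at `(-1)^j` and keeping from `S_2` only the coefficients of the monomials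
`x_l x_i` with `l < i` is an algebra homomorphism from `K` to an exterior algebra. The summands of
`Z_i` with `j < i` contain the factor `x_i²` and die, so `Z_i` goes to
`x_0 x_i ∧ ⋯ ∧ x_{i-1} x_i`. The product of the `Z_i` therefore goes to the wedge of
all the monomials `x_l x_i` with `l < i`, which are distinct basis vectors.
-/

section ExteriorAlgebra

variable {R M : Type*} [CommRing R] [AddCommGroup M] [Module R M]

theorem ιMulti_ne_zero_of_det_ne_zero {m : ℕ} {v : Fin m → M} (f : Fin m → Module.Dual R M)
    (hdet : (Matrix.of fun i j => f j (v i)).det ≠ 0) : ExteriorAlgebra.ιMulti R m v ≠ 0 := by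
  intro hv
  have hv' : exteriorPower.ιMulti R m v = 0 := Subtype.ext hv
  apply hdet
  rw [← exteriorPower.alternatingMapToDual_apply_ιMulti, hv', map_zero]

theorem prod_map_ι_basis_ne_zero [Nontrivial R] {I : Type*} (b : Module.Basis I R M) {L : List I}
    (hL : L.Nodup) : (L.map fun p => ExteriorAlgebra.ι R (b p)).prod ≠ 0 := by
  have hprod : (L.map fun p => ExteriorAlgebra.ι R (b p)).prod =
      ExteriorAlgebra.ιMulti R L.length (fun i => b (L.get i)) := by
    rw [ExteriorAlgebra.ιMulti_apply]
    conv_lhs => rw [← List.ofFn_get L, List.map_ofFn]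
    rfl
  have hmat : (Matrix.of fun i j => b.coord (L.get j) (b (L.get i))) =
      (1 : Matrix (Fin L.length) (Fin L.length) R) := by
    classical
    ext i j
    simp [Matrix.one_apply, Finsupp.single_apply, hL.getElem_inj_iff, Fin.ext_iff]
  rw [hprod]
  refine ιMulti_ne_zero_of_det_ne_zero (fun j => b.coord (L.get j)) ?_
  rw [hmat, Matrix.det_one]
  exact one_ne_zero

end ExteriorAlgebra

section Degree

theorem mem_Kt_iff_mem_baseChange {t : ℕ} {a : KK k n} :
    a ∈ Kt k n t ↔ a ∈ (⋀[k]^t (S2 k n)).baseChange (S k n) :=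
  Iff.rfl

theorem Zel_mem_Kt (i : Fin n) : (Zel i : KK k n) ∈ Kt k n i := by
  refine sum_mem fun j _ => zsmul_mem (mem_Kt_iff_mem_baseChange.2 ?_) _
  exact Submodule.tmul_mem_baseChange_of_mem _ (ExteriorAlgebra.ιMulti_range k i ⟨_, rfl⟩)

theorem prod_map_Zel_mem_Kt (L : List (Fin n)) :
    (L.map fun i => (Zel i : KK k n)).prod ∈ Kt k n (L.map Fin.val).sum :=
  mem_Kt_iff_mem_baseChange.2 <|
    SetLike.list_prod_map_mem_graded (A := fun t => (⋀[k]^t (S2 k n)).baseChange (S k n))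
      L Fin.val _ fun i _ => mem_Kt_iff_mem_baseChange.1 (Zel_mem_Kt i)

theorem sum_map_val_finRange (n : ℕ) :
    ((List.finRange n).map Fin.val).sum = n * (n - 1) / 2 := by
  rw [← Fin.sum_univ_def, Fin.sum_univ_eq_sum_range (fun i => i), Finset.sum_range_id]

end Degree

section MixedCoeff

theorem coeff_single_add_single_X_mul_X {R σ : Type*} [CommSemiring R] [DecidableEq σ]
    (i j a b : σ) :
    coeff (Finsupp.single i 1 + Finsupp.single j 1) (X a * X b : MvPolynomial σ R) =
      if a = i ∧ b = j ∨ a = j ∧ b = i then 1 else 0 := by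
  have hmonomial : (X a * X b : MvPolynomial σ R) =
      monomial (Finsupp.single a 1 + Finsupp.single b 1) 1 := by
    simp [X, monomial_mul]
  rw [hmonomial, coeff_monomial]
  simp [Finsupp.single_add_single_eq_single_add_single]

/-- The pairs `l < i` in `Fin n`, written `⟨i, l⟩`: they index the monomials `x_l x_i` of `S_2`
that are not squares. -/
abbrev StrictPair (n : ℕ) := (i : Fin n) × Fin i

/-- The projection of `S_2` to the span of the nonsquare monomials: `⟨i, l⟩` is sent to the
coefficient of `x_l x_i`. -/
def mixedCoeff : S2 k n →ₗ[k] (StrictPair n → k) :=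
  LinearMap.pi fun p =>
    lcoeff k (Finsupp.single (p.2.castLE p.1.isLt.le) 1 + Finsupp.single p.1 1) ∘ₗ
      Submodule.subtype _

theorem mixedCoeff_q_apply (a b : Fin n) (p : StrictPair n) :
    mixedCoeff (q a b : S2 k n) p =
      if a = p.2.castLE p.1.isLt.le ∧ b = p.1 ∨ a = p.1 ∧ b = p.2.castLE p.1.isLt.le
      then 1 else 0 :=
  coeff_single_add_single_X_mul_X _ _ _ _

theorem mixedCoeff_q_self (a : Fin n) : mixedCoeff (q a a : S2 k n) = 0 := by
  ext ⟨i, l⟩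
  rw [mixedCoeff_q_apply, if_neg, Pi.zero_apply]
  simp only [Fin.ext_iff, Fin.val_castLE]
  lia

theorem mixedCoeff_q_castLE (i : Fin n) (l : Fin i) :
    mixedCoeff (q (l.castLE i.isLt.le) i : S2 k n) = Pi.single ⟨i, l⟩ 1 := by
  ext ⟨i', l'⟩
  rw [mixedCoeff_q_apply, Pi.single_apply]
  refine if_congr ⟨?_, ?_⟩ rfl rfl
  · rintro (⟨hl, rfl⟩ | ⟨hl, hi⟩)
    · rw [Fin.castLE_injective _ hl]
    · simp only [Fin.ext_iff, Fin.val_castLE] at hl hi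
      lia
  · rintro ⟨rfl, rfl⟩
    exact Or.inl ⟨rfl, rfl⟩

end MixedCoeff

section Specialization

variable (k n) in
/-- The algebra homomorphism `K → ⋀ k^{(l < i)}` that evaluates `x_j` at `(-1)^j` and applies
`mixedCoeff` to `S_2`. The values `(-1)^j` cancel the signs in `Z_i`. -/
def specialization : KK k n →ₐ[k] ExteriorAlgebra k (StrictPair n → k) :=
  (Algebra.TensorProduct.lid k _).toAlgHom.comp <|
    Algebra.TensorProduct.map (aeval fun j : Fin n => (-1 : k) ^ (j : ℕ))
      (ExteriorAlgebra.map mixedCoeff)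

theorem specialization_X_tmul (j : Fin n) (ω : ExteriorAlgebra k (S2 k n)) :
    specialization k n ((X j : S k n) ⊗ₜ[k] ω) =
      (-1 : ℤ) ^ (j : ℕ) • ExteriorAlgebra.map mixedCoeff ω := by
  rw [← Int.cast_smul_eq_zsmul k]
  simp [specialization]

theorem specialization_Zel (i : Fin n) :
    specialization k n (Zel i : KK k n) =
      ExteriorAlgebra.ιMulti k i fun l => (Pi.single ⟨i, l⟩ 1 : StrictPair n → k) := by
  have hterm (j : Fin (i + 1)) :
      specialization k n (((-1 : ℤ) ^ (j : ℕ)) • ((X (j.castLE i.isLt) : S k n) ⊗ₜ[k]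
        ExteriorAlgebra.ιMulti k i fun l => q ((j.succAbove l).castLE i.isLt) i)) =
      ExteriorAlgebra.ιMulti k i fun l =>
        mixedCoeff (q ((j.succAbove l).castLE i.isLt) i : S2 k n) := by
    rw [map_zsmul, specialization_X_tmul, ExteriorAlgebra.map_apply_ιMulti, smul_smul,
      Fin.val_castLE, ← mul_pow, neg_one_mul, neg_neg, one_pow, one_smul]
    rfl
  simp only [Zel, map_sum, hterm]
  rw [Fintype.sum_eq_single (Fin.last i)]
  · simp only [Fin.succAbove_last, ← mixedCoeff_q_castLE]
    rfl
  · intro j hj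
    obtain ⟨l, hl⟩ := Fin.exists_succAbove_eq hj.symm
    refine AlternatingMap.map_coord_zero _ l ?_
    rw [hl]
    exact mixedCoeff_q_self i

theorem specialization_prod_map_Zel (L : List (Fin n)) :
    specialization k n (L.map fun i => (Zel i : KK k n)).prod =
      ((L.sigma fun i => List.finRange i).map fun p =>
        ExteriorAlgebra.ι k (Pi.basisFun k (StrictPair n) p)).prod := by
  induction L with
  | nil => simp
  | cons i L ih =>
    have hcolumn : specialization k n (Zel i) =
        (((List.finRange i).map (Sigma.mk i)).map fun p =>
          ExteriorAlgebra.ι k (Pi.basisFun k (StrictPair n) p)).prod := by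
      rw [specialization_Zel, ExteriorAlgebra.ιMulti_apply, List.map_map, List.ofFn_eq_map]
      simp [Function.comp_def]
    rw [List.map_cons, List.prod_cons, map_mul, ih, hcolumn, List.sigma_cons, List.map_append,
      List.prod_append]

end Specialization

theorem full_product_nonzero_general (k : Type) [Field k] (n : ℕ) :
    (((List.finRange n).map (fun i => (Zel i : KK k n))).prod ∈ Kt k n (n*(n-1)/2)) ∧
      ((List.finRange n).map (fun i => (Zel i : KK k n))).prod ≠ 0 := by
  constructor
  · rw [← sum_map_val_finRange]
    exact prod_map_Zel_mem_Kt (List.finRange n)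
  · intro hprod
    have himage := specialization_prod_map_Zel (k := k) (List.finRange n)
    rw [hprod, map_zero] at himage
    have hnodup : ((List.finRange n).sigma fun i => List.finRange i).Nodup :=
      (List.nodup_finRange n).sigma fun i => List.nodup_finRange i
    exact prod_map_ι_basis_ne_zero _ hnodup himage.symm

/-- The product `Z_0 · Z_1 ⋯ Z_{n-1}` is a nonzero element of `K_N`,
where `N = n(n-1)/2`. -/
theorem full_product_nonzero (k : Type) [Field k] [CharZero k] (n : ℕ) :
    (((List.finRange n).map (fun i => (Zel i : KK k n))).prod ∈ Kt k n (n*(n-1)/2)) ∧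
      ((List.finRange n).map (fun i => (Zel i : KK k n))).prod ≠ 0 :=
  full_product_nonzero_general k n

end
end

section
/- The product Z_0 · Z_1 · ⋯ · Z_{n-1} ∈ K_N, where N = n(n-1)/2, is not a Koszul boundary: it does not lie in the image of the differential d_{N+1} : K_{N+1} → K_N. -/
set_option maxHeartbeats 1000000
set_option synthInstance.maxHeartbeats 400000

open scoped TensorProduct
open MvPolynomial

noncomputable section

variable (k : Type) [Field k] (n : ℕ)

variable {k n}

variable (k n)

variable {k n}

/-!
Extend the coefficients to `k[x, y]` and multiply a Koszul chain of degree `N = n(n-1)/2` by the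
product `P` of the `n` polar forms `∑ j, y_j ⊗ x_j x_i`, which lands in the top exterior power since
`dim S_2 = N + n`; then apply the apolarity functional `x^a y^b ↦ (∂/∂y)^a y^b |_{y = 0}` to the
coefficients. Since forms above the top degree vanish, the Leibniz rule turns `d(ω) P` into
`± ω d(P)`, and `d(P)` is `∑ j, x_j y_j` times `∑ j, x_j • P_j`, where `P_j` is an odd derivative of
`P` and `∑ j, ∂P_j/∂y_j = 0`. Multiplication by `x_j` is adjoint to `∂/∂y_j`, so moving it across
twice shows that boundaries pair to zero. On the other hand `Z_i` is a contraction of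
`x_0 x_i ∧ ⋯ ∧ x_i²`, hence `Z_0 ⋯ Z_{n-1} P` is, up to sign, `∏ i, ∑ j ≤ i, x_j y_j` times a
generator of the top exterior power, and every monomial of this polynomial has a positive apolar
value.
-/

namespace KoszulCycles

section Wedge

variable {R M : Type*} [CommRing R] [AddCommGroup M] [Module R M]

variable (R) in
/-- The exterior product `m₁ ∧ ⋯ ∧ mᵣ` of a list of vectors. -/
def wedge (l : List M) : ExteriorAlgebra R M := (l.map (ExteriorAlgebra.ι R)).prod

lemma wedge_append (l l' : List M) : wedge R (l ++ l') = wedge R l * wedge R l' := by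
  rw [wedge, List.map_append, List.prod_append, wedge, wedge]

lemma wedge_cons (m : M) (l : List M) : wedge R (m :: l) = ExteriorAlgebra.ι R m * wedge R l := by
  rw [wedge, List.map_cons, List.prod_cons, wedge]

lemma wedge_append_singleton (l : List M) (m : M) :
    wedge R (l ++ [m]) = wedge R l * ExteriorAlgebra.ι R m := by
  simp [wedge]

lemma wedge_ofFn {t : ℕ} (m : Fin t → M) :
    wedge R (List.ofFn m) = ExteriorAlgebra.ιMulti R t m := by
  rw [wedge, List.map_ofFn, ExteriorAlgebra.ιMulti_apply]
  rfl

lemma wedge_eq_ιMulti_get (l : List M) :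
    wedge R l = ExteriorAlgebra.ιMulti R l.length l.get := by
  rw [← wedge_ofFn, List.ofFn_get]

lemma ι_mul_ι_swap (m m' : M) :
    ExteriorAlgebra.ι R m * ExteriorAlgebra.ι R m' =
      -(ExteriorAlgebra.ι R m' * ExteriorAlgebra.ι R m) :=
  eq_neg_of_add_eq_zero_left (ExteriorAlgebra.ι_add_mul_swap m m')

lemma wedge_mul_ι (l : List M) (m : M) :
    wedge R l * ExteriorAlgebra.ι R m =
      (-1 : ℤˣ) ^ l.length • (ExteriorAlgebra.ι R m * wedge R l) := by
  induction l with
  | nil => simp [wedge]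
  | cons a l ih =>
    rw [wedge_cons, mul_assoc, ih, mul_smul_comm, ← mul_assoc, ι_mul_ι_swap, neg_mul, mul_assoc,
      List.length_cons, pow_succ, mul_neg_one, smul_neg, Units.neg_smul]

lemma wedge_mul_ι_of_mem {l : List M} {m : M} (hm : m ∈ l) :
    wedge R l * ExteriorAlgebra.ι R m = 0 := by
  induction l with
  | nil => simp at hm
  | cons a l ih =>
    rcases List.mem_cons.1 hm with rfl | hm
    · rw [wedge_mul_ι, wedge_cons, ← mul_assoc, ExteriorAlgebra.ι_sq_zero, zero_mul, smul_zero]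
    · rw [wedge_cons, mul_assoc, ih hm, mul_zero]

lemma ιMulti_basis_ne_zero [Nontrivial R] {r : ℕ} (b : Module.Basis (Fin r) R M) :
    ExteriorAlgebra.ιMulti R r b ≠ 0 := by
  intro h
  have hdet := ExteriorAlgebra.liftAlternating_apply_ιMulti
    (Function.update (0 : ∀ i, M [⋀^Fin i]→ₗ[R] R) r b.det) b
  rw [h, map_zero, Function.update_self, b.det_self] at hdet
  exact zero_ne_one hdet

lemma wedge_map_basis_ne_zero [Nontrivial R] {I : Type*} (b : Module.Basis I R M)
    {l : List I} (hl : l.Nodup) (hmem : ∀ i, i ∈ l) : wedge R (l.map b) ≠ 0 := by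
  classical
  have hlist : l.map b =
      List.ofFn (b.reindex (List.Nodup.getEquivOfForallMemList l hl hmem).symm) := by
    refine List.ext_get (by simp) fun i _ _ => ?_
    simp
  rw [hlist, wedge_ofFn]
  exact ιMulti_basis_ne_zero _

lemma wedge_eq_zero_of_finrank_lt {K V : Type*} [Field K] [AddCommGroup V] [Module K V]
    [Module.Finite K V] {l : List V} (hl : Module.finrank K V < l.length) : wedge K l = 0 := by
  rw [wedge_eq_ιMulti_get]
  refine AlternatingMap.map_linearDependent _ _ fun hli => hl.not_ge ?_
  simpa using hli.fintype_card_le_finrank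

end Wedge

section Contraction

variable {R A M : Type*} [CommRing R] [CommRing A] [Algebra R A] [AddCommGroup M] [Module R M]

variable (A) in
/-- The inclusion `ω ↦ 1 ⊗ ω` of the forms with constant coefficients into the forms with
coefficients in `A`. -/
def constForm : ExteriorAlgebra R M →ₐ[R] A ⊗[R] ExteriorAlgebra R M :=
  Algebra.TensorProduct.includeRight

lemma tmul_eq_smul_constForm (a : A) (ω : ExteriorAlgebra R M) :
    a ⊗ₜ[R] ω = a • constForm A ω := by
  rw [constForm, Algebra.TensorProduct.includeRight_apply, TensorProduct.smul_tmul', smul_eq_mul,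
    mul_one]

/-- The recursion step `(ω, ξ) ↦ θ(m) ⊗ ω - m ∧ ξ` that defines `contraction θ (m ∧ ω)` when `ξ` is
the contraction of `ω`. -/
def contractionStep (θ : M →ₗ[R] A) :
    M →ₗ[R] ExteriorAlgebra R M × (A ⊗[R] ExteriorAlgebra R M) →ₗ[R]
      A ⊗[R] ExteriorAlgebra R M :=
  (TensorProduct.mk R A (ExteriorAlgebra R M) ∘ₗ θ).compl₂ (LinearMap.fst R _ _) -
    ((LinearMap.mul R (A ⊗[R] ExteriorAlgebra R M)) ∘ₗ (constForm A).toLinearMap ∘ₗ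
      ExteriorAlgebra.ι R).compl₂ (LinearMap.snd R _ _)

lemma contractionStep_apply (θ : M →ₗ[R] A) (m : M) (ω : ExteriorAlgebra R M)
    (ξ : A ⊗[R] ExteriorAlgebra R M) :
    contractionStep θ m (ω, ξ) =
      θ m • constForm A ω - constForm A (ExteriorAlgebra.ι R m) * ξ := by
  rw [← tmul_eq_smul_constForm]
  rfl

lemma contractionStep_contractionStep (θ : M →ₗ[R] A) (m : M) (ω : ExteriorAlgebra R M)
    (ξ : A ⊗[R] ExteriorAlgebra R M) :
    contractionStep θ m (ExteriorAlgebra.ι R m * ω, contractionStep θ m (ω, ξ)) =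
      (0 : QuadraticForm R M) m • ξ := by
  rw [contractionStep_apply, contractionStep_apply, mul_sub, ← mul_assoc, ← map_mul,
    ExteriorAlgebra.ι_sq_zero, map_mul, mul_smul_comm]
  simp

/-- The contraction (interior product) of `A`-valued forms with a linear map `θ : M → A`: the
`A`-linear antiderivation of `A ⊗ ⋀ M` that extends `θ`. -/
def contraction (θ : M →ₗ[R] A) :
    A ⊗[R] ExteriorAlgebra R M →ₗ[A] A ⊗[R] ExteriorAlgebra R M :=
  LinearMap.liftBaseChange A (CliffordAlgebra.foldr' 0 (contractionStep θ)
    (contractionStep_contractionStep θ) 0)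

lemma contraction_one (θ : M →ₗ[R] A) : contraction θ 1 = 0 := by
  rw [Algebra.TensorProduct.one_def, contraction, LinearMap.liftBaseChange_one_tmul,
    ← map_one (algebraMap R (ExteriorAlgebra R M))]
  exact (CliffordAlgebra.foldr'_algebraMap _ _ _ _ _).trans (smul_zero _)

lemma contraction_ι_mul (θ : M →ₗ[R] A) (m : M) (ξ : A ⊗[R] ExteriorAlgebra R M) :
    contraction θ (constForm A (ExteriorAlgebra.ι R m) * ξ) =
      θ m • ξ - constForm A (ExteriorAlgebra.ι R m) * contraction θ ξ := by
  induction ξ using TensorProduct.induction_on with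
  | zero => simp
  | add ξ η hξ hη => rw [mul_add, map_add, hξ, hη, map_add, smul_add, mul_add]; abel
  | tmul a ω =>
    have hconst : contraction θ (constForm A (ExteriorAlgebra.ι R m * ω)) =
        θ m • constForm A ω -
          constForm A (ExteriorAlgebra.ι R m) * contraction θ (constForm A ω) := by
      simp only [contraction, constForm, Algebra.TensorProduct.includeRight_apply,
        LinearMap.liftBaseChange_one_tmul]
      exact (CliffordAlgebra.foldr'_ι_mul _ _ _ _ _ _).trans (contractionStep_apply θ m ω _)
    rw [tmul_eq_smul_constForm, mul_smul_comm, map_smul, ← map_mul, hconst, map_smul, smul_sub,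
      mul_smul_comm, smul_comm]

lemma contraction_wedge_mul (θ : M →ₗ[R] A) (l : List M) (ξ : A ⊗[R] ExteriorAlgebra R M) :
    contraction θ (constForm A (wedge R l) * ξ) =
      contraction θ (constForm A (wedge R l)) * ξ +
        (-1 : ℤˣ) ^ l.length • (constForm A (wedge R l) * contraction θ ξ) := by
  induction l with
  | nil => simp [wedge, contraction_one]
  | cons m l ih =>
    rw [wedge_cons, map_mul (constForm A), mul_assoc, contraction_ι_mul, contraction_ι_mul, ih,
      List.length_cons, pow_succ, mul_neg_one, Units.neg_smul, mul_add, mul_smul_comm, sub_mul,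
      smul_mul_assoc, mul_assoc, mul_assoc]
    abel

lemma contraction_ιMulti (θ : M →ₗ[R] A) {t : ℕ} (m : Fin (t + 1) → M) :
    contraction θ (constForm A (ExteriorAlgebra.ιMulti R (t + 1) m)) =
      ∑ j : Fin (t + 1), (-1 : ℤ) ^ (j : ℕ) •
        (θ (m j) • constForm A (ExteriorAlgebra.ιMulti R t fun l => m (j.succAbove l))) := by
  induction t with
  | zero =>
    rw [ExteriorAlgebra.ιMulti_succ_apply, ExteriorAlgebra.ιMulti_zero_apply, map_mul,
      contraction_ι_mul, map_one, contraction_one]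
    simp
  | succ t ih =>
    have hsucc (j : Fin (t + 1)) :
        ExteriorAlgebra.ιMulti R (t + 1) (fun l => m (j.succ.succAbove l)) =
          ExteriorAlgebra.ι R (m 0) *
            ExteriorAlgebra.ιMulti R t fun l => m (j.succAbove l).succ := by
      rw [ExteriorAlgebra.ιMulti_succ_apply]
      simp [Matrix.vecTail, Function.comp_def]
    rw [ExteriorAlgebra.ιMulti_succ_apply, map_mul, contraction_ι_mul,
      show Matrix.vecTail m = fun l => m l.succ from rfl, ih,
      Fin.sum_univ_succ (n := t + 1), Finset.mul_sum,
      sub_eq_add_neg, ← Finset.sum_neg_distrib]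
    simp only [Fin.val_zero, pow_zero, one_smul, Fin.zero_succAbove, hsucc, map_mul, Fin.val_succ,
      pow_succ, mul_neg_one, neg_smul, mul_smul_comm]

end Contraction

section Apolar

variable {R σ : Type*} [CommSemiring R] [Fintype σ]

/-- The value of the apolarity pairing on the monomial `x^a y^b` with exponent vector `s = (a, b)`:
`a!` if `a = b`, and `0` otherwise. -/
def apolarWeight (s : σ ⊕ σ →₀ ℕ) : ℕ :=
  ∏ i, if s (.inl i) = s (.inr i) then (s (.inl i)).factorial else 0

variable (R σ) in
/-- The apolarity pairing `x^a y^b ↦ (∂/∂y)^a y^b |_{y = 0}`, as a linear functional on `R[x, y]`,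
where `x` and `y` are the two copies of `σ` in `σ ⊕ σ`. -/
def apolar : MvPolynomial (σ ⊕ σ) R →ₗ[R] R :=
  (basisMonomials (σ ⊕ σ) R).constr R fun s => (apolarWeight s : R)

lemma apolar_monomial (s : σ ⊕ σ →₀ ℕ) (c : R) :
    apolar R σ (monomial s c) = c * apolarWeight s := by
  have hone : apolar R σ (monomial s 1) = apolarWeight s :=
    (basisMonomials (σ ⊕ σ) R).constr_basis R _ s
  rw [← mul_one c, ← smul_eq_mul, ← smul_monomial, map_smul, hone, smul_eq_mul, smul_eq_mul,
    mul_one]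

lemma apolarWeight_add_single_inl (s : σ ⊕ σ →₀ ℕ) (i : σ) :
    apolarWeight (s + Finsupp.single (.inl i) 1) =
      s (.inr i) * apolarWeight (s - Finsupp.single (.inr i) 1) := by
  classical
  unfold apolarWeight
  rw [← Finset.mul_prod_erase _ _ (Finset.mem_univ i),
    ← Finset.mul_prod_erase _ _ (Finset.mem_univ i), ← mul_assoc]
  congr 1
  · rcases h : s (.inr i) with _ | b
    · simp [h]
    · by_cases hb : s (.inl i) = b <;> simp [h, hb, Nat.factorial_succ]
  · refine Finset.prod_congr rfl fun j hj => ?_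
    have hij : i ≠ j := (Finset.ne_of_mem_erase hj).symm
    simp [hij]

lemma apolar_X_mul (i : σ) (F : MvPolynomial (σ ⊕ σ) R) :
    apolar R σ (X (.inl i) * F) = apolar R σ (pderiv (.inr i) F) := by
  induction F using MvPolynomial.induction_on' with
  | add F G hF hG => rw [mul_add, map_add, hF, hG, map_add, map_add]
  | monomial s c =>
    rw [X, monomial_mul, one_mul, add_comm, pderiv_monomial, apolar_monomial, apolar_monomial,
      apolarWeight_add_single_inl, Nat.cast_mul, mul_assoc]

lemma apolarWeight_pos {s : σ ⊕ σ →₀ ℕ} (hs : ∀ i, s (.inl i) = s (.inr i)) :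
    0 < apolarWeight s :=
  Finset.prod_pos fun i _ => by rw [if_pos (hs i)]; exact Nat.factorial_pos _

lemma apolar_prod_X_mul_X {ι : Type*} (t : Finset ι) (c : ι → σ) :
    ∃ a : ℕ, 0 < a ∧ apolar R σ (∏ i ∈ t, X (.inl (c i)) * X (.inr (c i))) = a := by
  have hmon (u : σ) : X (.inl u) * X (.inr u) =
      (monomial (Finsupp.single (.inl u) 1 + Finsupp.single (.inr u) 1) 1 :
        MvPolynomial (σ ⊕ σ) R) := by
    rw [X, X, monomial_mul, mul_one]
  simp only [hmon]
  rw [← monomial_sum_one, apolar_monomial, one_mul]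
  refine ⟨_, apolarWeight_pos fun u => ?_, rfl⟩
  classical
  simp [Finsupp.finsetSum_apply, Finsupp.single_apply]

lemma apolar_prod_sum_ne_zero [CharZero R] {ι : Type*} [Fintype ι] (t : ι → Finset σ)
    (ht : ∀ i, (t i).Nonempty) :
    apolar R σ (∏ i, ∑ j ∈ t i, X (.inl j) * X (.inr j)) ≠ 0 := by
  classical
  choose a ha_pos ha using apolar_prod_X_mul_X (R := R) (σ := σ) (Finset.univ : Finset ι)
  rw [Finset.prod_univ_sum, map_sum, Finset.sum_congr rfl fun c _ => ha c, ← Nat.cast_sum,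
    Nat.cast_ne_zero]
  exact (Finset.sum_pos (fun c _ => ha_pos c) (Fintype.piFinset_nonempty.2 ht)).ne'

end Apolar

section Coefficients

variable {R A M : Type*} [CommRing R] [CommRing A] [Algebra R A] [AddCommGroup M] [Module R M]

variable (M) in
/-- A derivation `d` of the coefficient ring, acting on forms by `a ⊗ ω ↦ d a ⊗ ω`. -/
def coeffDeriv (d : Derivation R A A) :
    A ⊗[R] ExteriorAlgebra R M →ₗ[R] A ⊗[R] ExteriorAlgebra R M :=
  LinearMap.rTensor _ d.toLinearMap

lemma coeffDeriv_tmul (d : Derivation R A A) (a : A) (ω : ExteriorAlgebra R M) :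
    coeffDeriv M d (a ⊗ₜ ω) = d a ⊗ₜ ω :=
  rfl

lemma coeffDeriv_one (d : Derivation R A A) : coeffDeriv M d 1 = 0 := by
  rw [Algebra.TensorProduct.one_def, coeffDeriv_tmul, d.map_one_eq_zero, TensorProduct.zero_tmul]

lemma coeffDeriv_smul (d : Derivation R A A) (a : A) (ξ : A ⊗[R] ExteriorAlgebra R M) :
    coeffDeriv M d (a • ξ) = d a • ξ + a • coeffDeriv M d ξ := by
  induction ξ using TensorProduct.induction_on with
  | zero => simp
  | add ξ η hξ hη => rw [smul_add, map_add, hξ, hη, map_add, smul_add, smul_add, add_add_add_comm]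
  | tmul b ω =>
    rw [TensorProduct.smul_tmul', coeffDeriv_tmul, coeffDeriv_tmul, smul_eq_mul, d.leibniz,
      TensorProduct.add_tmul, TensorProduct.smul_tmul', TensorProduct.smul_tmul', add_comm,
      smul_eq_mul, smul_eq_mul, smul_eq_mul, mul_comm b]

lemma coeffDeriv_constForm_mul (d : Derivation R A A) (ω : ExteriorAlgebra R M)
    (ξ : A ⊗[R] ExteriorAlgebra R M) :
    coeffDeriv M d (constForm A ω * ξ) = constForm A ω * coeffDeriv M d ξ := by
  induction ξ using TensorProduct.induction_on with
  | zero => simp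
  | add ξ η hξ hη => rw [mul_add, map_add, hξ, hη, map_add, mul_add]
  | tmul b η => simp [constForm, coeffDeriv_tmul]

variable (M) in
/-- A functional `φ` on the coefficient ring, acting on forms by `a ⊗ ω ↦ φ a • ω`. -/
def coeffEval (φ : A →ₗ[R] R) : A ⊗[R] ExteriorAlgebra R M →ₗ[R] ExteriorAlgebra R M :=
  (TensorProduct.lid R (ExteriorAlgebra R M)).toLinearMap ∘ₗ LinearMap.rTensor _ φ

lemma coeffEval_tmul (φ : A →ₗ[R] R) (a : A) (ω : ExteriorAlgebra R M) :
    coeffEval M φ (a ⊗ₜ ω) = φ a • ω :=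
  rfl

end Coefficients

section PolarForms

variable {R σ M : Type*} [CommRing R] [Fintype σ] [AddCommGroup M] [Module R M]

variable (R σ) in
/-- The polynomial `∑ j, x_j y_j`. -/
def dotXY : MvPolynomial (σ ⊕ σ) R := ∑ j, X (.inl j) * X (.inr j)

lemma pderiv_inr_dotXY (j : σ) : pderiv (.inr j) (dotXY R σ) = X (.inl j) := by
  classical
  simp [dotXY, pderiv_X, Pi.single_apply]

lemma coeffEval_apolar_X_smul (i : σ)
    (ξ : MvPolynomial (σ ⊕ σ) R ⊗[R] ExteriorAlgebra R M) :
    coeffEval M (apolar R σ) ((X (.inl i) : MvPolynomial (σ ⊕ σ) R) • ξ) =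
      coeffEval M (apolar R σ) (coeffDeriv M (pderiv (.inr i)) ξ) := by
  induction ξ using TensorProduct.induction_on with
  | zero => simp
  | add ξ η hξ hη => rw [smul_add, map_add, hξ, hη, map_add, map_add]
  | tmul b ω =>
    rw [TensorProduct.smul_tmul', coeffDeriv_tmul, coeffEval_tmul, coeffEval_tmul, smul_eq_mul,
      apolar_X_mul]

/-- The form `∑ j, y_j w(j, i)`: the vector `w(-, i)` polarised by the variables `y`. -/
def polarForm (w : σ → σ → M) (i : σ) : MvPolynomial (σ ⊕ σ) R ⊗[R] ExteriorAlgebra R M :=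
  ∑ j, (X (.inr j) : MvPolynomial (σ ⊕ σ) R) • constForm _ (ExteriorAlgebra.ι R (w j i))

/-- The product of the polar forms of a list of indices. -/
def polarProd (w : σ → σ → M) (L : List σ) : MvPolynomial (σ ⊕ σ) R ⊗[R] ExteriorAlgebra R M :=
  (L.map (polarForm w)).prod

lemma polarProd_nil (w : σ → σ → M) : polarProd (R := R) w [] = 1 := rfl

lemma polarProd_cons (w : σ → σ → M) (i : σ) (L : List σ) :
    polarProd (R := R) w (i :: L) = polarForm w i * polarProd w L := by
  rw [polarProd, List.map_cons, List.prod_cons, polarProd]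

lemma polarForm_mul_ι_mul (w : σ → σ → M) (i : σ) (m : M)
    (ξ : MvPolynomial (σ ⊕ σ) R ⊗[R] ExteriorAlgebra R M) :
    polarForm w i * (constForm _ (ExteriorAlgebra.ι R m) * ξ) =
      -(constForm _ (ExteriorAlgebra.ι R m) * (polarForm w i * ξ)) := by
  have hanti : polarForm w i * constForm _ (ExteriorAlgebra.ι R m) =
      -(constForm _ (ExteriorAlgebra.ι R m) * polarForm w i) := by
    simp only [polarForm, Finset.sum_mul, Finset.mul_sum, smul_mul_assoc, mul_smul_comm,
      ← Finset.sum_neg_distrib, ← map_mul, ι_mul_ι_swap _ m, map_neg, smul_neg]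
  rw [← mul_assoc, hanti, ← mul_assoc]
  exact neg_mul (constForm _ (ExteriorAlgebra.ι R m) * polarForm w i) ξ

lemma coeffDeriv_polarForm_mul (w : σ → σ → M) (i l : σ)
    (ξ : MvPolynomial (σ ⊕ σ) R ⊗[R] ExteriorAlgebra R M) :
    coeffDeriv M (pderiv (.inr l)) (polarForm w i * ξ) =
      constForm _ (ExteriorAlgebra.ι R (w l i)) * ξ +
        polarForm w i * coeffDeriv M (pderiv (.inr l)) ξ := by
  classical
  simp only [polarForm, Finset.sum_mul, map_sum, smul_mul_assoc, coeffDeriv_smul,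
    coeffDeriv_constForm_mul, Finset.sum_add_distrib, pderiv_X, Pi.single_apply,
    Sum.inr.injEq, ite_smul, one_smul, zero_smul, Finset.sum_ite_eq', Finset.mem_univ, if_true]

variable [DecidableEq σ]

/-- The odd derivative of `polarProd w L` that sends `polarForm w i` to `1` if `i = j` and to `0`
otherwise. -/
def oddDeriv (w : σ → σ → M) (j : σ) : List σ → MvPolynomial (σ ⊕ σ) R ⊗[R] ExteriorAlgebra R M
  | [] => 0
  | i :: L => (if i = j then polarProd w L else 0) - polarForm w i * oddDeriv w j L

lemma coeffDeriv_polarProd {w : σ → σ → M} (hw : ∀ i j, w i j = w j i) (l : σ) (L : List σ) :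
    coeffDeriv M (pderiv (.inr l)) (polarProd (R := R) w L) =
      ∑ j, constForm _ (ExteriorAlgebra.ι R (w j l)) * oddDeriv w j L := by
  induction L with
  | nil => simp [polarProd_nil, oddDeriv, coeffDeriv_one]
  | cons i L ih =>
    simp only [polarProd_cons, coeffDeriv_polarForm_mul, ih, oddDeriv, mul_sub, mul_ite, mul_zero,
      Finset.sum_sub_distrib, Finset.sum_ite_eq, Finset.mem_univ, if_true, hw l i, Finset.mul_sum,
      polarForm_mul_ι_mul, Finset.sum_neg_distrib]
    rw [sub_eq_add_neg]

lemma sum_coeffDeriv_oddDeriv {w : σ → σ → M} (hw : ∀ i j, w i j = w j i) (L : List σ) :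
    ∑ j, coeffDeriv M (pderiv (.inr j)) (oddDeriv (R := R) w j L) = 0 := by
  induction L with
  | nil => simp [oddDeriv]
  | cons i L ih =>
    simp only [oddDeriv, map_sub, apply_ite (coeffDeriv M _), map_zero, Finset.sum_sub_distrib,
      Finset.sum_ite_eq, Finset.mem_univ, if_true, coeffDeriv_polarForm_mul,
      Finset.sum_add_distrib, ← Finset.mul_sum, ih, mul_zero, add_zero, coeffDeriv_polarProd hw,
      sub_self]

-- Under the apolarity pairing, multiplication by `x_j` is adjoint to `∂/∂y_j`, and the divergence
-- of `oddDeriv w · L` vanishes, so only the derivatives of `b` survive.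
lemma coeffEval_apolar_smul_sum_oddDeriv {w : σ → σ → M} (hw : ∀ i j, w i j = w j i)
    (b : MvPolynomial (σ ⊕ σ) R) (ω : ExteriorAlgebra R M) (L : List σ) :
    coeffEval M (apolar R σ) (b • (constForm _ ω *
      ∑ j, (X (.inl j) : MvPolynomial (σ ⊕ σ) R) • oddDeriv w j L)) =
    coeffEval M (apolar R σ) (constForm _ ω * ∑ j, pderiv (.inr j) b • oddDeriv w j L) := by
  calc
    _ = coeffEval M (apolar R σ) (∑ j, coeffDeriv M (pderiv (.inr j))
          (b • (constForm _ ω * oddDeriv w j L))) := by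
      simp only [Finset.mul_sum, Finset.smul_sum, mul_smul_comm, smul_comm b, map_sum,
        coeffEval_apolar_X_smul]
    _ = _ := by
      simp only [coeffDeriv_smul, coeffDeriv_constForm_mul, Finset.sum_add_distrib,
        ← Finset.smul_sum, ← Finset.mul_sum, sum_coeffDeriv_oddDeriv hw, smul_zero, add_zero,
        ← mul_smul_comm]

lemma coeffEval_apolar_dotXY_smul_eq_zero {w : σ → σ → M} (hw : ∀ i j, w i j = w j i)
    {f : MvPolynomial (σ ⊕ σ) R} (hf : ∀ j, pderiv (.inr j) f = 0) (ω : ExteriorAlgebra R M)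
    (L : List σ) :
    coeffEval M (apolar R σ) (f • (constForm _ ω * (dotXY R σ •
      ∑ j, (X (.inl j) : MvPolynomial (σ ⊕ σ) R) • oddDeriv w j L))) = 0 := by
  rw [mul_smul_comm, smul_smul, coeffEval_apolar_smul_sum_oddDeriv hw]
  simp only [pderiv_mul, hf, pderiv_inr_dotXY, zero_mul, zero_add, mul_smul,
    ← Finset.smul_sum, mul_smul_comm]
  rw [coeffEval_apolar_smul_sum_oddDeriv hw]
  simp only [hf, zero_smul, Finset.sum_const_zero, mul_zero, map_zero]

lemma contraction_polarProd {w : σ → σ → M} {θ : M →ₗ[R] MvPolynomial (σ ⊕ σ) R}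
    (hθ : ∀ i j, θ (w i j) = X (.inl i) * X (.inl j)) (L : List σ) :
    contraction θ (polarProd w L) =
      dotXY R σ • ∑ j, (X (.inl j) : MvPolynomial (σ ⊕ σ) R) • oddDeriv w j L := by
  induction L with
  | nil => simp [polarProd_nil, oddDeriv, contraction_one]
  | cons i L ih =>
    have hcontr (ξ : MvPolynomial (σ ⊕ σ) R ⊗[R] ExteriorAlgebra R M) :
        contraction θ (polarForm w i * ξ) =
          (dotXY R σ * X (.inl i)) • ξ - polarForm w i * contraction θ ξ := by
      simp only [polarForm, Finset.sum_mul, smul_mul_assoc, map_sum, map_smul, contraction_ι_mul,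
        hθ, smul_sub, Finset.sum_sub_distrib, smul_smul, dotXY, Finset.sum_smul]
      congr 1
      exact Finset.sum_congr rfl fun j _ => by ring_nf
    rw [polarProd_cons, hcontr, ih]
    simp only [oddDeriv, smul_sub, smul_ite, smul_zero, Finset.sum_sub_distrib, Finset.sum_ite_eq,
      Finset.mem_univ, if_true, mul_smul, mul_smul_comm, Finset.mul_sum]

end PolarForms

section PolarVanishing

variable {K σ V : Type*} [Field K] [Fintype σ] [AddCommGroup V] [Module K V] [Module.Finite K V]

lemma constForm_wedge_mul_polarProd_eq_zero (w : σ → σ → V) (L : List σ) (l : List V)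
    (hl : Module.finrank K V < l.length + L.length) :
    constForm _ (wedge K l) * polarProd w L = 0 := by
  induction L generalizing l with
  | nil => rw [wedge_eq_zero_of_finrank_lt (by simpa using hl), map_zero, zero_mul]
  | cons i L ih =>
    rw [polarProd_cons, polarForm, Finset.sum_mul, Finset.mul_sum]
    refine Finset.sum_eq_zero fun j _ => ?_
    rw [smul_mul_assoc, mul_smul_comm, ← mul_assoc, ← map_mul, ← wedge_append_singleton, ih,
      smul_zero]
    simp only [List.length_append, List.length_cons, List.length_nil] at hl ⊢
    lia

lemma coeffEval_apolar_contraction_mul_polarProd_eq_zero {w : σ → σ → V}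
    (hw : ∀ i j, w i j = w j i) {θ : V →ₗ[K] MvPolynomial (σ ⊕ σ) K}
    (hθ : ∀ i j, θ (w i j) = X (.inl i) * X (.inl j)) {f : MvPolynomial (σ ⊕ σ) K}
    (hf : ∀ j, pderiv (.inr j) f = 0) {L : List σ} {l : List V}
    (hl : Module.finrank K V < l.length + L.length) :
    coeffEval V (apolar K σ)
      (f • (contraction θ (constForm _ (wedge K l)) * polarProd w L)) = 0 := by
  classical
  have hleibniz := contraction_wedge_mul θ l (polarProd w L)
  rw [constForm_wedge_mul_polarProd_eq_zero w L l hl, map_zero, eq_comm] at hleibniz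
  rw [eq_neg_of_add_eq_zero_left hleibniz, contraction_polarProd hθ, smul_neg, map_neg,
    smul_comm f, Units.smul_def, map_zsmul, coeffEval_apolar_dotXY_smul_eq_zero hw hf,
    smul_zero, neg_zero]

end PolarVanishing

section Quadrics

lemma q_comm (i j : Fin n) : (q i j : S2 k n) = q j i :=
  Subtype.ext (mul_comm _ _)

variable (k) in
/-- The quadratic monomials `x_j x_i` with `j ≤ i`, indexed by the pairs `⟨i, j⟩`. -/
def quadric (p : Σ i : Fin n, Fin (i + 1)) : S2 k n :=
  q (Fin.castLE p.1.isLt p.2) p.1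

lemma quadric_mk_of_le {i j : Fin n} (hji : j ≤ i) :
    quadric k ⟨i, ⟨j, Nat.lt_succ_of_le hji⟩⟩ = q j i :=
  rfl

lemma coe_quadric (p : Σ i : Fin n, Fin (i + 1)) :
    (quadric k p : S k n) =
      monomial (Finsupp.single (Fin.castLE p.1.isLt p.2) 1 + Finsupp.single p.1 1) 1 := by
  rw [← mul_one (1 : k), ← monomial_mul]
  rfl

lemma injective_quadricExponent :
    Function.Injective fun p : Σ i : Fin n, Fin (i + 1) =>
      (Finsupp.single (Fin.castLE p.1.isLt p.2) 1 + Finsupp.single p.1 1 : Fin n →₀ ℕ) := by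
  rintro ⟨i, j⟩ ⟨i', j'⟩ h
  have hj := Nat.le_of_lt_succ j.isLt
  have hj' := Nat.le_of_lt_succ j'.isLt
  have hcases := (Finsupp.single_add_single_eq_single_add_single one_ne_zero one_ne_zero).1 h
  simp only [Fin.ext_iff, Fin.val_castLE] at hcases
  obtain rfl : i = i' := by lia
  obtain rfl : j = j' := by lia
  rfl

lemma linearIndependent_quadric : LinearIndependent k (quadric k (n := n)) := by
  have hcomp : (S2 k n).subtype ∘ quadric k = basisMonomials (Fin n) k ∘ _ := funext coe_quadric
  refine LinearIndependent.of_comp (S2 k n).subtype ?_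
  rw [hcomp]
  exact (basisMonomials (Fin n) k).linearIndependent.comp _ injective_quadricExponent

open scoped Pointwise in
lemma span_range_quadric : Submodule.span k (Set.range (quadric k (n := n))) = ⊤ := by
  have hq (i j : Fin n) : q i j ∈ Set.range (quadric k) := by
    rcases le_total i j with hij | hji
    · exact ⟨_, quadric_mk_of_le hij⟩
    · exact ⟨_, (quadric_mk_of_le hji).trans (q_comm _ _)⟩
  apply Submodule.map_injective_of_injective (S2 k n).injective_subtype
  rw [Submodule.map_top, Submodule.range_subtype, Submodule.map_span]
  refine le_antisymm (Submodule.span_le.2 ?_) ?_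
  · rintro _ ⟨v, -, rfl⟩
    exact v.2
  · have hspan : S2 k n =
        Submodule.span k (Set.range (X : Fin n → S k n) * Set.range X) := by
      rw [S2, ← homogeneousSubmodule_one_pow, homogeneousSubmodule_one_eq_span_X, pow_two,
        Submodule.span_mul_span]
    refine hspan.trans_le (Submodule.span_mono ?_)
    rintro _ ⟨_, ⟨i, rfl⟩, _, ⟨j, rfl⟩, rfl⟩
    exact ⟨q i j, hq i j, rfl⟩

variable (k n) in
/-- The basis of `S_2` that consists of the quadratic monomials. -/
def quadricBasis : Module.Basis (Σ i : Fin n, Fin (i + 1)) k (S2 k n) :=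
  .mk linearIndependent_quadric span_range_quadric.ge

lemma quadricBasis_apply (p : Σ i : Fin n, Fin (i + 1)) : quadricBasis k n p = quadric k p :=
  Module.Basis.mk_apply _ _ p

instance : Module.Finite k (S2 k n) := .of_basis (quadricBasis k n)

lemma finrank_S2 : Module.finrank k (S2 k n) = n * (n - 1) / 2 + n := by
  rw [Module.finrank_eq_card_basis (quadricBasis k n), Fintype.card_sigma]
  simp only [Fintype.card_fin]
  rw [Finset.sum_add_distrib, Fin.sum_univ_eq_sum_range (fun i => i) n, Finset.sum_range_id]
  simp

end Quadrics

section Boundaries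

lemma Kt_eq_span (t : ℕ) :
    Kt k n t = Submodule.span k
      (Set.image2 (fun (f : S k n) ω => f ⊗ₜ[k] ω) Set.univ
        (Set.range (ExteriorAlgebra.ιMulti k t))) := by
  rw [Kt, TensorProduct.range_map, LinearMap.range_id, Submodule.range_subtype,
    ← Submodule.span_univ, ← ExteriorAlgebra.ιMulti_span_fixedDegree, Submodule.map₂_span_span]
  rfl

variable (k n) in
/-- The inclusion of the Koszul algebra into the forms with coefficients in `k[x, y]`. -/
def extendCoeffs :
    KK k n →ₐ[k] MvPolynomial (Fin n ⊕ Fin n) k ⊗[k] ExteriorAlgebra k (S2 k n) :=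
  Algebra.TensorProduct.map (rename Sum.inl) (AlgHom.id k _)

lemma extendCoeffs_tmul (f : S k n) (ω : ExteriorAlgebra k (S2 k n)) :
    extendCoeffs k n (f ⊗ₜ ω) =
      (rename Sum.inl f : MvPolynomial (Fin n ⊕ Fin n) k) • constForm _ ω :=
  tmul_eq_smul_constForm _ _

variable (k n) in
/-- The inclusion `S_2 → k[x, y]`, whose contraction is the Koszul differential. -/
def quadricToPoly : S2 k n →ₗ[k] MvPolynomial (Fin n ⊕ Fin n) k :=
  (rename Sum.inl).toLinearMap ∘ₗ (S2 k n).subtype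

lemma quadricToPoly_q (i j : Fin n) :
    quadricToPoly k n (q i j) = X (.inl i) * X (.inl j) := by
  simp [quadricToPoly, q, mulW, xv]

lemma extendCoeffs_koszulDiff {D : ℕ → KK k n →ₗ[k] KK k n} (hD : IsKoszulDiff D) {t : ℕ}
    (f : S k n) (m : Fin (t + 1) → S2 k n) :
    extendCoeffs k n (D (t + 1) (f ⊗ₜ ExteriorAlgebra.ιMulti k (t + 1) m)) =
      (rename Sum.inl f : MvPolynomial (Fin n ⊕ Fin n) k) • contraction (quadricToPoly k n)
        (constForm _ (ExteriorAlgebra.ιMulti k (t + 1) m)) := by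
  rw [hD.2, contraction_ιMulti, map_sum, Finset.smul_sum]
  refine Finset.sum_congr rfl fun j _ => ?_
  rw [map_zsmul, extendCoeffs_tmul, map_mul, mul_smul, smul_comm _ ((-1 : ℤ) ^ _)]
  rfl

lemma pderiv_inr_rename_inl {R σ : Type*} [CommSemiring R] (j : σ) (f : MvPolynomial σ R) :
    pderiv (.inr j) (rename (Sum.inl : σ → σ ⊕ σ) f) = 0 := by
  classical
  refine pderiv_eq_zero_of_notMem_vars fun hj => ?_
  simpa using vars_rename _ f hj

variable (k) in
/-- The functional that detects the product of the cycles: multiply with polar forms and apply the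
apolarity pairing to the coefficients. -/
def polarPairing (L : List (Fin n)) : KK k n →ₗ[k] ExteriorAlgebra k (S2 k n) :=
  coeffEval _ (apolar k (Fin n)) ∘ₗ LinearMap.mulRight k (polarProd q L) ∘ₗ
    (extendCoeffs k n).toLinearMap

lemma polarPairing_apply (L : List (Fin n)) (z : KK k n) :
    polarPairing k L z =
      coeffEval _ (apolar k (Fin n)) (extendCoeffs k n z * polarProd q L) :=
  rfl

lemma map_koszulDiff_le_ker_polarPairing {D : ℕ → KK k n →ₗ[k] KK k n} (hD : IsKoszulDiff D)
    {t : ℕ} {L : List (Fin n)} (hL : Module.finrank k (S2 k n) < t + 1 + L.length) :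
    Submodule.map (D (t + 1)) (Kt k n (t + 1)) ≤ LinearMap.ker (polarPairing k L) := by
  rw [Kt_eq_span, Submodule.map_span, Submodule.span_le]
  rintro _ ⟨_, ⟨f, -, _, ⟨m, rfl⟩, rfl⟩, rfl⟩
  rw [SetLike.mem_coe, LinearMap.mem_ker, polarPairing_apply, extendCoeffs_koszulDiff hD,
    ← wedge_ofFn, smul_mul_assoc]
  exact coeffEval_apolar_contraction_mul_polarProd_eq_zero q_comm quadricToPoly_q
    (fun j => pderiv_inr_rename_inl j f) (by simpa using hL)

end Boundaries

section Cycles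

variable (k) in
/-- The quadratic monomials `x_0 x_i, …, x_i²`, the factors of the exterior products in `Z_i`. -/
def column (i : Fin n) : List (S2 k n) := List.ofFn fun j : Fin (i + 1) => quadric k ⟨i, j⟩

lemma q_mem_column {i j : Fin n} (hji : j ≤ i) : q j i ∈ column k i :=
  (List.mem_ofFn' _ _).2 ⟨_, quadric_mk_of_le hji⟩

lemma wedge_flatMap_column_ne_zero : wedge k ((List.finRange n).flatMap (column k)) ≠ 0 := by
  have hbasis : (List.finRange n).flatMap (column k) =
      ((List.finRange n).sigma fun i => List.finRange (i + 1)).map (quadricBasis k n) := by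
    rw [List.sigma, List.map_flatMap]
    congr 1
    funext i
    simp only [column, List.ofFn_eq_map, List.map_map, Function.comp_def, quadricBasis_apply]
  rw [hbasis]
  refine wedge_map_basis_ne_zero _ ?_ fun p => ?_
  · exact (List.nodup_finRange n).sigma fun i => List.nodup_finRange _
  · exact List.mem_sigma.2 ⟨List.mem_finRange _, List.mem_finRange _⟩

variable (k) in
/-- The linear map on `S_2` that sends `x_j x_i` to `x_j` for `j ≤ i`, and all other quadratic
monomials to `0`. -/
def columnForm (i : Fin n) : S2 k n →ₗ[k] MvPolynomial (Fin n ⊕ Fin n) k :=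
  (quadricBasis k n).constr k fun p =>
    if p.1 = i then X (.inl (Fin.castLE p.1.isLt p.2)) else 0

lemma columnForm_quadric (i : Fin n) (j : Fin (i + 1)) :
    columnForm k i (quadric k ⟨i, j⟩) = X (.inl (Fin.castLE i.isLt j)) := by
  rw [← quadricBasis_apply, columnForm, Module.Basis.constr_basis, if_pos rfl]

lemma extendCoeffs_Zel (i : Fin n) :
    extendCoeffs k n (Zel i) =
      contraction (columnForm k i) (constForm _ (wedge k (column k i))) := by
  rw [column, wedge_ofFn, contraction_ιMulti, Zel, map_sum]
  refine Finset.sum_congr rfl fun j _ => ?_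
  rw [map_zsmul, extendCoeffs_tmul, rename_X, columnForm_quadric]
  rfl

variable (k) in
/-- The part `∑ j ≤ i, y_j x_j x_i` of the polar form of index `i`. -/
def truncatedPolarForm (i : Fin n) :
    MvPolynomial (Fin n ⊕ Fin n) k ⊗[k] ExteriorAlgebra k (S2 k n) :=
  ∑ j ∈ Finset.Iic i,
    (X (.inr j) : MvPolynomial (Fin n ⊕ Fin n) k) • constForm _ (ExteriorAlgebra.ι k (q j i))

variable (k) in
/-- The polynomial `∑ j ≤ i, x_j y_j`. -/
def truncatedDotXY (i : Fin n) : MvPolynomial (Fin n ⊕ Fin n) k :=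
  ∑ j ∈ Finset.Iic i, X (.inl j) * X (.inr j)

lemma contraction_truncatedPolarForm (i : Fin n) :
    contraction (columnForm k i) (truncatedPolarForm k i) = truncatedDotXY k i • 1 := by
  have hι (j : Fin n) (hj : j ≤ i) : contraction (columnForm k i)
      (constForm _ (ExteriorAlgebra.ι k (q j i))) =
        (X (.inl j) : MvPolynomial (Fin n ⊕ Fin n) k) • 1 := by
    have hcontr := contraction_ι_mul (columnForm k i) (q j i) 1
    rwa [mul_one, contraction_one, mul_zero, sub_zero, ← quadric_mk_of_le hj,
      columnForm_quadric] at hcontr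
  rw [truncatedPolarForm, map_sum, truncatedDotXY, Finset.sum_smul]
  refine Finset.sum_congr rfl fun j hj => ?_
  rw [map_smul, hι j (Finset.mem_Iic.1 hj), smul_smul, mul_comm]

lemma wedge_column_mul_truncatedPolarForm (i : Fin n) :
    constForm _ (wedge k (column k i)) * truncatedPolarForm k i = 0 := by
  rw [truncatedPolarForm, Finset.mul_sum]
  refine Finset.sum_eq_zero fun j hj => ?_
  rw [mul_smul_comm, ← map_mul, wedge_mul_ι_of_mem (q_mem_column (Finset.mem_Iic.1 hj)), map_zero,
    smul_zero]

lemma extendCoeffs_Zel_mul_truncatedPolarForm (i : Fin n) :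
    extendCoeffs k n (Zel i) * truncatedPolarForm k i =
      (-1 : ℤˣ) ^ (i : ℕ) • truncatedDotXY k i • constForm _ (wedge k (column k i)) := by
  have hleibniz := contraction_wedge_mul (columnForm k i) (column k i) (truncatedPolarForm k i)
  rw [wedge_column_mul_truncatedPolarForm, map_zero, ← extendCoeffs_Zel,
    contraction_truncatedPolarForm, mul_smul_comm, mul_one, column, List.length_ofFn, pow_succ,
    mul_neg_one, Units.neg_smul, ← sub_eq_add_neg, eq_comm] at hleibniz
  exact sub_eq_zero.1 hleibniz

lemma wedge_mul_polarForm {i : Fin n} {l : List (S2 k n)} (hl : ∀ j > i, q j i ∈ l) :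
    constForm _ (wedge k l) * polarForm q i =
      (-1 : ℤˣ) ^ l.length • (truncatedPolarForm k i * constForm _ (wedge k l)) := by
  have htrunc : constForm _ (wedge k l) * polarForm q i =
      constForm _ (wedge k l) * truncatedPolarForm k i := by
    simp only [polarForm, truncatedPolarForm, Finset.mul_sum]
    refine (Finset.sum_subset (Finset.subset_univ _) fun j _ hj => ?_).symm
    rw [mul_smul_comm, ← map_mul, wedge_mul_ι_of_mem (hl j (by simpa using hj)), map_zero,
      smul_zero]
  rw [htrunc, truncatedPolarForm, Finset.mul_sum, Finset.sum_mul, Finset.smul_sum]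
  refine Finset.sum_congr rfl fun j _ => ?_
  rw [mul_smul_comm, ← map_mul, wedge_mul_ι, Units.smul_def, map_zsmul, map_mul, smul_mul_assoc,
    smul_comm]
  rfl

lemma prod_extendCoeffs_Zel_mul_polarProd {L : List (Fin n)} (hlt : L.Pairwise (· < ·))
    (hupper : ∀ i ∈ L, ∀ j > i, j ∈ L) :
    ∃ ε : ℤˣ, (L.map fun i => extendCoeffs k n (Zel i)).prod * polarProd q L.reverse =
      ε • (L.map (truncatedDotXY k)).prod • constForm _ (wedge k (L.flatMap (column k))) := by
  induction L with
  | nil => exact ⟨1, by simp [polarProd_nil, wedge]⟩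
  | cons i L ih =>
    rw [List.pairwise_cons] at hlt
    have hmem : ∀ j > i, j ∈ L := fun j hj =>
      List.mem_of_ne_of_mem hj.ne' (hupper i List.mem_cons_self j hj)
    obtain ⟨ε, hε⟩ := ih hlt.2 fun l hl j hj => hmem j ((hlt.1 l hl).trans hj)
    have hkill : ∀ j > i, (q j i : S2 k n) ∈ L.flatMap (column k) := fun j hj =>
      List.mem_flatMap.2 ⟨j, hmem j hj, by rw [q_comm]; exact q_mem_column hj.le⟩
    refine ⟨ε * (-1) ^ (L.flatMap (column k)).length * (-1) ^ (i : ℕ), ?_⟩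
    have hsplit : polarProd (R := k) (q (k := k)) (i :: L).reverse =
        polarProd q L.reverse * polarForm q i := by
      simp [polarProd]
    calc
      _ = extendCoeffs k n (Zel i) * ((L.map fun i => extendCoeffs k n (Zel i)).prod *
            polarProd q L.reverse) * polarForm q i := by
        rw [hsplit, List.map_cons, List.prod_cons]
        simp only [mul_assoc]
      _ = ε • (L.map (truncatedDotXY k)).prod • (extendCoeffs k n (Zel i) *
            (constForm _ (wedge k (L.flatMap (column k))) * polarForm q i)) := by
        rw [hε, mul_smul_comm, mul_smul_comm, smul_mul_assoc, smul_mul_assoc, mul_assoc]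
      _ = ε • (L.map (truncatedDotXY k)).prod • (-1 : ℤˣ) ^ (L.flatMap (column k)).length •
            ((-1 : ℤˣ) ^ (i : ℕ) • truncatedDotXY k i • (constForm _ (wedge k (column k i)) *
              constForm _ (wedge k (L.flatMap (column k))))) := by
        rw [wedge_mul_polarForm hkill, mul_smul_comm, ← mul_assoc,
          extendCoeffs_Zel_mul_truncatedPolarForm, smul_mul_assoc, smul_mul_assoc]
      _ = _ := by
        rw [← map_mul, ← wedge_append, List.flatMap_cons, List.map_cons, List.prod_cons,
          mul_comm (truncatedDotXY k i), ← smul_comm ((-1 : ℤˣ) ^ _) (L.map _).prod,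
          ← smul_comm ((-1 : ℤˣ) ^ _) (L.map _).prod]
        simp only [mul_smul]

lemma polarPairing_prod_Zel_ne_zero [CharZero k] :
    polarPairing k (List.finRange n).reverse ((List.finRange n).map Zel).prod ≠ 0 := by
  obtain ⟨ε, hε⟩ := prod_extendCoeffs_Zel_mul_polarProd (k := k) (List.pairwise_lt_finRange n)
    fun _ _ j _ => List.mem_finRange j
  rw [polarPairing_apply, map_list_prod, List.map_map]
  simp only [Function.comp_def]
  rw [hε, Units.smul_def, map_zsmul, ← Units.smul_def, ← tmul_eq_smul_constForm, coeffEval_tmul,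
    ← Fin.prod_univ_def]
  refine (smul_ne_zero_iff_ne ε).2 (smul_ne_zero ?_ wedge_flatMap_column_ne_zero)
  exact apolar_prod_sum_ne_zero _ fun i => Finset.nonempty_Iic

end Cycles

end KoszulCycles

/-- The product `Z_0 · Z_1 ⋯ Z_{n-1} ∈ K_N`, `N = n(n-1)/2`, is not a
Koszul boundary: it does not lie in the image of `d_{N+1} : K_{N+1} → K_N`. -/
theorem full_product_not_boundary (k : Type) [Field k] [CharZero k] (n : ℕ)
    (D : ℕ → KK k n →ₗ[k] KK k n) (hD : IsKoszulDiff D) :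
    ((List.finRange n).map (fun i => (Zel i : KK k n))).prod ∉
      Submodule.map (D (n*(n-1)/2 + 1)) (Kt k n (n*(n-1)/2 + 1)) := by
  intro hboundary
  have hdim : Module.finrank k (S2 k n) <
      n * (n - 1) / 2 + 1 + (List.finRange n).reverse.length := by
    rw [KoszulCycles.finrank_S2, List.length_reverse, List.length_finRange]
    lia
  exact KoszulCycles.polarPairing_prod_Zel_ne_zero
    (KoszulCycles.map_koszulDiff_le_ker_polarPairing hD hdim hboundary)

end
end
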